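/- arXiv:1511.05001 — 4 statements merged into one kernel-verified Lean document; each statement's English description precedes it below -/
import Mathlib

section
/- Let U and V be open subsets of ℂ, let f : U → ℂ be holomorphic with f(U) ⊆ V, and let g : U → ℂ be holomorphic. In the pair model of superfunctions, D(Φ*h) = g · Φ*(D h) holds for every pair h = (h₀, h₁) of holomorphic functions on V if and only if f′(z) = g(z)² for all z ∈ U. (This is the compatibility condition for the superconformal coordinate change z̃ = f(z), θ̃ = g(z)θ, i.e. the condition that ∂_θ + θ∂_z = g(z)(∂_θ̃ + θ̃∂_z̃), which underlies the correspondence between super Riemann surfaces and Riemann surfaces equipped with a spinor bundle S with S ⊗_ℂ S = TM.) -/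
/-!
Superfunctions `h = h₀ + θ h₁` on an open set of `ℂ^{1|1}` are modeled as pairs
`(h₀, h₁)` of holomorphic functions.  The superconformal derivative models the
odd vector field `D = ∂_θ + θ∂_z`, and `superPullback f g` models the pullback
along the coordinate change `(z, θ) ↦ (f z, g z · θ)`.
-/

/-- The superconformal derivative `D (h₀, h₁) = (h₁, h₀')`. -/
noncomputable def superD (h : (ℂ → ℂ) × (ℂ → ℂ)) : (ℂ → ℂ) × (ℂ → ℂ) :=
  (h.2, deriv h.1)

/-- Pullback along the coordinate change `(z, θ) ↦ (f z, g z · θ)`: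
`Φ* (h₀, h₁) = (h₀ ∘ f, g · (h₁ ∘ f))`. -/
def superPullback (f g : ℂ → ℂ) (h : (ℂ → ℂ) × (ℂ → ℂ)) : (ℂ → ℂ) × (ℂ → ℂ) :=
  (fun z => h.1 (f z), fun z => g z * h.2 (f z))

/-- Multiplication of a superfunction pair by a function `a`. -/
def superSMul (a : ℂ → ℂ) (h : (ℂ → ℂ) × (ℂ → ℂ)) : (ℂ → ℂ) × (ℂ → ℂ) :=
  (fun z => a z * h.1 z, fun z => a z * h.2 z)

/-- `D(Φ* h) = g · Φ*(D h)` holds for every pair `h = (h₀, h₁)` of holomorphic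
functions on `V` if and only if `f' = g²` on `U`: the superconformality
condition for the coordinate change `z̃ = f(z)`, `θ̃ = g(z)θ`. -/
theorem superconformal_coordinate_change_iff (U V : Set ℂ) (hU : IsOpen U) (hV : IsOpen V)
    (f g : ℂ → ℂ) (hf : DifferentiableOn ℂ f U) (hfV : Set.MapsTo f U V)
    (hg : DifferentiableOn ℂ g U) :
    (∀ h₀ h₁ : ℂ → ℂ, DifferentiableOn ℂ h₀ V → DifferentiableOn ℂ h₁ V →
      ∀ z ∈ U,
        (superD (superPullback f g (h₀, h₁))).1 z
            = (superSMul g (superPullback f g (superD (h₀, h₁)))).1 z ∧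
        (superD (superPullback f g (h₀, h₁))).2 z
            = (superSMul g (superPullback f g (superD (h₀, h₁)))).2 z)
      ↔ ∀ z ∈ U, deriv f z = (g z) ^ 2 := by
  constructor
  · intro h z hz
    -- Test on the coordinate function `h₀ = id`, whose derivative is `1`.
    have key := (h id 0 differentiableOn_id (differentiableOn_const 0) z hz).2
    simpa [superD, superPullback, superSMul, sq] using key
  · intro h h₀ h₁ hh₀ _ z hz
    refine ⟨rfl, ?_⟩
    have hfz : DifferentiableAt ℂ f z := hf.differentiableAt (hU.mem_nhds hz)
    have hh₀z : DifferentiableAt ℂ h₀ (f z) :=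
      hh₀.differentiableAt (hV.mem_nhds (hfV hz))
    have chain : deriv (fun w => h₀ (f w)) z = deriv h₀ (f z) * deriv f z :=
      deriv_comp z hh₀z hfz
    simp only [superD, superPullback, superSMul]
    rw [chain, h z hz]
    ring
end

section
/- Let U ⊆ ℂ be open and let φ : U → ℝⁿ be a smooth map each of whose components is harmonic, i.e. ∂²φⱼ/∂x² + ∂²φⱼ/∂y² = 0 on U for every j (identifying ℂ with ℝ² via z = x + iy). Then the energy–momentum tensor (Hopf differential) T : U → ℂ defined by T(z) = Σⱼ (∂ₓφⱼ(z) − i·∂_yφⱼ(z))² is holomorphic on U. (This is the statement that for a harmonic map the energy–momentum tensor is a holomorphic quadratic differential.) -/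
/-!
The second-order condition on each `φ j` is exactly harmonicity in Mathlib's sense, so by
`HarmonicAt.differentiableAt_complex_partial` (the Cauchy–Riemann equations for
`∂ₓφⱼ - i ∂_yφⱼ` are `Δφⱼ = 0` and the symmetry of second derivatives) each `∂ₓφⱼ - i ∂_yφⱼ` is
holomorphic, and `T` is a finite sum of squares of such functions.
-/

/-- Partial derivative of `f : ℂ → ℝ` in the direction of the real axis
(identifying `ℂ` with `ℝ²` via `z = x + iy`). -/
noncomputable def pdx (f : ℂ → ℝ) (z : ℂ) : ℝ := fderiv ℝ f z 1

/-- Partial derivative of `f : ℂ → ℝ` in the direction of the imaginary axis. -/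
noncomputable def pdy (f : ℂ → ℝ) (z : ℂ) : ℝ := fderiv ℝ f z Complex.I

/-- At a point where `f` is `C²`, the iterated partial derivatives compute the Laplacian. -/
theorem laplacian_eq_pdx_pdx_add_pdy_pdy {f : ℂ → ℝ} {z : ℂ} (hf : ContDiffAt ℝ 2 f z) :
    Laplacian.laplacian f z = pdx (pdx f) z + pdy (pdy f) z := by
  have hd : DifferentiableAt ℝ (fderiv ℝ f) z :=
    (hf.fderiv_right (m := 1) (by norm_num)).differentiableAt (by norm_num)
  have key (v : ℂ) : fderiv ℝ (fun w => fderiv ℝ f w v) z v = fderiv ℝ (fderiv ℝ f) z v v := by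
    rw [fderiv_clm_apply hd (by fun_prop)]
    simp
  have hx : pdx (pdx f) z = fderiv ℝ (fderiv ℝ f) z 1 1 := key 1
  have hy : pdy (pdy f) z = fderiv ℝ (fderiv ℝ f) z Complex.I Complex.I := key Complex.I
  rw [hx, hy]
  simp [InnerProductSpace.laplacian_eq_iteratedFDeriv_complexPlane, iteratedFDeriv_two_apply]

/-- For a smooth map `φ : U → ℝⁿ` with harmonic components, the
energy–momentum tensor (Hopf differential)
`T(z) = Σⱼ (∂ₓφⱼ(z) − i ∂_yφⱼ(z))²` is holomorphic on `U`. -/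
theorem energy_momentum_tensor_holomorphic (n : ℕ) (U : Set ℂ) (hU : IsOpen U)
    (φ : Fin n → ℂ → ℝ) (hφ : ∀ j, ContDiffOn ℝ (⊤ : ℕ∞) (φ j) U)
    (hharm : ∀ j, ∀ z ∈ U, pdx (pdx (φ j)) z + pdy (pdy (φ j)) z = 0) :
    DifferentiableOn ℂ
      (fun z => ∑ j, ((pdx (φ j) z : ℂ) - Complex.I * (pdy (φ j) z)) ^ 2) U := by
  intro z hz
  have hC (j : Fin n) (w : ℂ) (hw : w ∈ U) : ContDiffAt ℝ 2 (φ j) w :=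
    ((hφ j).contDiffAt (hU.mem_nhds hw)).of_le
      (WithTop.coe_le_coe.mpr (le_top : (2 : ℕ∞) ≤ ⊤))
  have hH (j : Fin n) : InnerProductSpace.HarmonicAt (φ j) z := by
    refine ⟨hC j z hz, ?_⟩
    filter_upwards [hU.mem_nhds hz] with w hw
    rw [laplacian_eq_pdx_pdx_add_pdy_pdy (hC j w hw), hharm j w hw, Pi.zero_apply]
  have hD (j : Fin n) :
      DifferentiableAt ℂ (fun w => (pdx (φ j) w : ℂ) - Complex.I * (pdy (φ j) w)) z :=
    HarmonicAt.differentiableAt_complex_partial (hH j)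
  exact (DifferentiableAt.fun_sum fun j _ => (hD j).pow 2).differentiableWithinAt
end

section
/- Let U, V ⊆ ℂ be open sets, let h : V → U be a holomorphic bijection, and let φ : U → ℝⁿ be smooth. Then the Dirichlet energy is invariant under the conformal (holomorphic) change of coordinates h: ∫_V (‖∂ₓ(φ∘h)‖² + ‖∂_y(φ∘h)‖²) dA = ∫_U (‖∂ₓφ‖² + ‖∂_yφ‖²) dA, as an equality of (possibly infinite) integrals of nonnegative functions with respect to two-dimensional Lebesgue measure. (This is the conformal invariance of the harmonic action functional for two-dimensional domains.) -/
open MeasureTheory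

/-!
By the Cauchy-Riemann equations, the real derivative of `h` at `z` is multiplication by
`c = h' z`. Multiplication by `c` is `‖c‖` times a rotation, so composing a real-linear map with it
scales `‖T 1‖ ^ 2 + ‖T I‖ ^ 2` by `normSq c` (`energy_mul_const`); it also has real determinant
`normSq c` (`det_smul_one_complex`). The Jacobian factor in the change of variables for the
injective map `h` thus cancels exactly the factor by which the energy density is scaled. No
separate argument is needed for `h' ≠ 0`, since the change of variables formula allows a
degenerate derivative.
-/

/-- Multiplication by `c` has real determinant `normSq c`. -/
lemma det_smul_one_complex (c : ℂ) :
    (c • (1 : ℂ →L[ℝ] ℂ)).det = Complex.normSq c := by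
  rw [ContinuousLinearMap.det, ← LinearMap.det_toMatrix Complex.basisOneI, Matrix.det_fin_two]
  simp [LinearMap.toMatrix_apply, Complex.normSq_apply]

/-- The sum of squares `‖T 1‖ ^ 2 + ‖T I‖ ^ 2` is multiplied by `normSq c` when `T` is precomposed
with multiplication by `c`. -/
lemma energy_mul_const {E : Type*} [NormedAddCommGroup E] [InnerProductSpace ℝ E]
    (T : ℂ →L[ℝ] E) (c : ℂ) :
    ‖T c‖ ^ 2 + ‖T (c * Complex.I)‖ ^ 2
      = Complex.normSq c * (‖T 1‖ ^ 2 + ‖T Complex.I‖ ^ 2) := by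
  have h1 : T c = c.re • T 1 + c.im • T Complex.I := by
    rw [← map_smul, ← map_smul, ← map_add]
    congr 1
    apply Complex.ext <;> simp
  have h2 : T (c * Complex.I) = (-c.im) • T 1 + c.re • T Complex.I := by
    rw [← map_smul, ← map_smul, ← map_add]
    congr 1
    apply Complex.ext <;> simp
  rw [h1, h2, norm_add_sq_real, norm_add_sq_real]
  simp only [norm_smul, mul_pow, real_inner_smul_left, real_inner_smul_right, Real.norm_eq_abs,
    sq_abs, Complex.normSq_apply]
  ring

/-- Conformal invariance of the Dirichlet (harmonic action) functional in two
dimensions: for a holomorphic bijection `h : V → U` and a smooth map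
`φ : U → ℝⁿ`, the Dirichlet energies of `φ ∘ h` on `V` and of `φ` on `U`
agree, as (possibly infinite) integrals with respect to Lebesgue measure.
Here `fderiv ℝ ⬝ z 1` and `fderiv ℝ ⬝ z Complex.I` are the partial
derivatives `∂ₓ` and `∂_y` (identifying `ℂ` with `ℝ²` via `z = x + iy`). -/
theorem dirichlet_energy_conformal_invariance (n : ℕ) (U V : Set ℂ)
    (hU : IsOpen U) (hV : IsOpen V) (h : ℂ → ℂ)
    (hh : DifferentiableOn ℂ h V) (hbij : Set.BijOn h V U)
    (φ : ℂ → EuclideanSpace ℝ (Fin n)) (hφ : ContDiffOn ℝ (⊤ : ℕ∞) φ U) :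
    ∫⁻ z in V, ENNReal.ofReal
        (‖fderiv ℝ (φ ∘ h) z 1‖ ^ 2 + ‖fderiv ℝ (φ ∘ h) z Complex.I‖ ^ 2)
      = ∫⁻ z in U, ENNReal.ofReal
        (‖fderiv ℝ φ z 1‖ ^ 2 + ‖fderiv ℝ φ z Complex.I‖ ^ 2) := by
  have hd : ∀ z ∈ V, HasFDerivAt h (deriv h z • (1 : ℂ →L[ℝ] ℂ)) z := fun z hz =>
    (hh.differentiableAt (hV.mem_nhds hz)).hasDerivAt.complexToReal_fderiv
  rw [← hbij.image_eq, lintegral_image_eq_lintegral_abs_det_fderiv_mul volume hV.measurableSet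
    (fun z hz => (hd z hz).hasFDerivWithinAt) hbij.injOn]
  refine setLIntegral_congr_fun hV.measurableSet fun z hz => ?_
  have hφz : DifferentiableAt ℝ φ (h z) :=
    (hφ.contDiffAt (hU.mem_nhds (hbij.mapsTo hz))).differentiableAt (by simp)
  have hc := (hφz.hasFDerivAt.comp z (hd z hz)).fderiv
  have key := energy_mul_const (fderiv ℝ φ (h z)) (deriv h z)
  simp only [hc, det_smul_one_complex, abs_of_nonneg (Complex.normSq_nonneg _)]
  rw [← ENNReal.ofReal_mul (Complex.normSq_nonneg _), ← key]
  simp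
end

section
/- Let Λ be the exterior algebra of ℝᵐ with its ℤ₂-grading Λ = Λ₀ ⊕ Λ₁. Let φ : ℝ → Λ₀ and ψ : ℝ → Λ₁ be smooth compactly supported maps and let q ∈ Λ₁. Define the toy-model action A(φ, ψ) := ∫_ℝ (φ′(x)·φ′(x) + ψ′(x)·ψ(x)) dx ∈ Λ. Then A is invariant to first order under the supersymmetry transformation δφ = q·ψ, δψ = q·φ′: the map t ↦ A(φ + t·q·ψ, ψ + t·q·φ′) has derivative 0 at t = 0. (This is the supersymmetry of the one-dimensional toy-model action, which geometrically expresses the independence of the superfield action from the choice of embedding of the underlying even manifold.) -/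
/-!
The action is in fact constant in `t`, not merely to first order. Write `a = φ'` and `b = ψ`.
Centrality of `φ` and the anticommutation of `ψ` with `q` pass to `a` and `b'` by differentiating
the identities `φ y = y φ` and `ψ q = -q ψ`. With these relations, and `q² = 0`, the terms
quadratic in `t` vanish and those linear in `t` add up to the total derivative `q (a b)'`:
  `(a + t q b')² + (b' + t q a') (b + t q a) = a² + b' b + t q (a b)'`.
Since `a b` is compactly supported, the total derivative integrates to zero.
-/

/-- The transformed action density at a point, expanded in `t`; `a`, `b`, `b'`, `c` stand for
the values of `φ'`, `ψ`, `ψ'`, `φ''`. The last factor is then the derivative of `φ' ψ`. -/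
lemma density_expand {Λ : Type*} [Ring Λ] [Algebra ℝ Λ] (q a b b' c : Λ) (t : ℝ)
    (ha : ∀ y, a * y = y * a) (hc : ∀ y, c * y = y * c)
    (hb' : b' * q = -(q * b')) (hqq : q * q = 0) :
    (a + t • (q * b')) * (a + t • (q * b')) + (b' + t • (q * c)) * (b + t • (q * a))
      = (a * a + b' * b) + t • (q * (c * b + a * b')) := by
  have h1 : a * (q * b') = q * (a * b') := by rw [ha, mul_assoc, ha]
  have h2 : (q * b') * a = q * (a * b') := by rw [mul_assoc, ha]
  have h3 : b' * (q * a) = -(q * (a * b')) := by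
    rw [← mul_assoc, hb', neg_mul, mul_assoc, ← ha]
  have h4 : (q * b') * (q * b') = 0 := by
    rw [mul_assoc, ← mul_assoc b', hb', neg_mul, mul_neg, mul_assoc q, ← mul_assoc q q, hqq]
    simp
  have h5 : (q * c) * (q * a) = 0 := by
    rw [mul_assoc, ← mul_assoc c, hc, mul_assoc, ← mul_assoc q q, hqq, zero_mul]
  simp only [add_mul, mul_add, smul_mul_assoc, mul_smul_comm, h1, h2, h3, h4, h5, smul_add,
    smul_neg, smul_zero, mul_assoc q c b]
  abel

/-- Supersymmetry of the one-dimensional toy-model action.  `Λ` is a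
finite-dimensional ℤ₂-graded supercommutative (normed) algebra — modeling the
exterior algebra of `ℝᵐ` with its grading `Λ = Λ₀ ⊕ Λ₁` — so even elements are
central and odd elements anticommute.  For smooth compactly supported fields
`φ : ℝ → Λ₀`, `ψ : ℝ → Λ₁` and an odd parameter `q ∈ Λ₁`, the action
`A(φ, ψ) = ∫ φ'·φ' + ψ'·ψ dx` is invariant to first order under the
supersymmetry transformation `δφ = q·ψ`, `δψ = q·φ'`. -/
theorem toy_model_action_susy_invariance
    {Λ : Type*} [NormedRing Λ] [NormedAlgebra ℝ Λ] [FiniteDimensional ℝ Λ]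
    (Λ₀ Λ₁ : Submodule ℝ Λ) (hcompl : IsCompl Λ₀ Λ₁) (hone : (1 : Λ) ∈ Λ₀)
    (hmul00 : ∀ a ∈ Λ₀, ∀ b ∈ Λ₀, a * b ∈ Λ₀)
    (hmul01 : ∀ a ∈ Λ₀, ∀ b ∈ Λ₁, a * b ∈ Λ₁)
    (hmul11 : ∀ a ∈ Λ₁, ∀ b ∈ Λ₁, a * b ∈ Λ₀)
    (hcentral : ∀ a ∈ Λ₀, ∀ b : Λ, a * b = b * a)
    (hanti : ∀ a ∈ Λ₁, ∀ b ∈ Λ₁, a * b = -(b * a))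
    (φ ψ : ℝ → Λ) (q : Λ)
    (hφ : ContDiff ℝ (⊤ : ℕ∞) φ) (hψ : ContDiff ℝ (⊤ : ℕ∞) ψ)
    (hφc : HasCompactSupport φ) (hψc : HasCompactSupport ψ)
    (hφ₀ : ∀ x, φ x ∈ Λ₀) (hψ₁ : ∀ x, ψ x ∈ Λ₁) (hq : q ∈ Λ₁) :
    deriv (fun t : ℝ => ∫ x : ℝ,
        (deriv (fun s => φ s + t • (q * ψ s)) x * deriv (fun s => φ s + t • (q * ψ s)) x
          + deriv (fun s => ψ s + t • (q * deriv φ s)) x * (ψ x + t • (q * deriv φ x)))) 0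
      = 0 := by
  have hφ' : ContDiff ℝ (⊤ : ℕ∞) (deriv φ) := (contDiff_infty_iff_deriv.1 hφ).2
  have hψ' : ContDiff ℝ (⊤ : ℕ∞) (deriv ψ) := (contDiff_infty_iff_deriv.1 hψ).2
  have hφ'' : ContDiff ℝ (⊤ : ℕ∞) (deriv (deriv φ)) := (contDiff_infty_iff_deriv.1 hφ').2
  have dφ : ∀ x, HasDerivAt φ (deriv φ x) x := fun x =>
    ((contDiff_infty_iff_deriv.1 hφ).1 x).hasDerivAt
  have dψ : ∀ x, HasDerivAt ψ (deriv ψ x) x := fun x =>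
    ((contDiff_infty_iff_deriv.1 hψ).1 x).hasDerivAt
  have dφ' : ∀ x, HasDerivAt (deriv φ) (deriv (deriv φ) x) x := fun x =>
    ((contDiff_infty_iff_deriv.1 hφ').1 x).hasDerivAt
  have central_deriv : ∀ f f' : ℝ → Λ, (∀ x, HasDerivAt f (f' x) x) →
      (∀ x y, f x * y = y * f x) → ∀ x y, f' x * y = y * f' x := by
    intro f f' hf hcomm x y
    have h1 := (hf x).mul_const y
    have h2 := (hf x).const_mul y
    rw [show (fun s => f s * y) = fun s => y * f s from funext fun s => hcomm s y] at h1
    exact h1.unique h2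
  have ca := central_deriv φ _ dφ (fun x y => hcentral _ (hφ₀ x) y)
  have cc := central_deriv _ _ dφ' ca
  have hb' : ∀ x, deriv ψ x * q = -(q * deriv ψ x) := by
    intro x
    have h1 := (dψ x).mul_const q
    have h2 := ((dψ x).const_mul q).fun_neg
    rw [show (fun s => ψ s * q) = fun s => -(q * ψ s) from
      funext fun s => hanti _ (hψ₁ s) q hq] at h1
    exact h1.unique h2
  have hqq : q * q = 0 := by
    have h2 : (2 : ℝ) • (q * q) = 0 := by
      rw [two_smul]
      exact eq_neg_iff_add_eq_zero.1 (hanti q hq q hq)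
    exact (smul_eq_zero.1 h2).resolve_left two_ne_zero
  have dprod : ∀ x, HasDerivAt (fun s => deriv φ s * ψ s)
      (deriv (deriv φ) x * ψ x + deriv φ x * deriv ψ x) x := fun x => (dφ' x).mul (dψ x)
  have hprodc : HasCompactSupport (fun s => deriv φ s * ψ s) := hψc.mul_left
  have hder : deriv (fun s => deriv φ s * ψ s)
      = fun x => deriv (deriv φ) x * ψ x + deriv φ x * deriv ψ x :=
    funext fun x => (dprod x).deriv
  have hTcont : Continuous
      (fun x => deriv (deriv φ) x * ψ x + deriv φ x * deriv ψ x) :=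
    (hφ''.continuous.mul hψ.continuous).add (hφ'.continuous.mul hψ'.continuous)
  have hTint : MeasureTheory.Integrable
      (fun x => deriv (deriv φ) x * ψ x + deriv φ x * deriv ψ x) :=
    hTcont.integrable_of_hasCompactSupport (hder ▸ hprodc.deriv)
  have hTzero : ∫ x, (deriv (deriv φ) x * ψ x + deriv φ x * deriv ψ x) = 0 :=
    MeasureTheory.integral_eq_zero_of_hasDerivAt_of_integrable dprod hTint
      ((hφ'.continuous.mul hψ.continuous).integrable_of_hasCompactSupport hprodc)
  have hIint : MeasureTheory.Integrable
      (fun x => deriv φ x * deriv φ x + deriv ψ x * ψ x) :=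
    ((hφ'.continuous.mul hφ'.continuous).add
      (hψ'.continuous.mul hψ.continuous)).integrable_of_hasCompactSupport
      (hφc.deriv.mul_left.add hψc.mul_left)
  have key : ∀ t : ℝ, (∫ x : ℝ,
        (deriv (fun s => φ s + t • (q * ψ s)) x * deriv (fun s => φ s + t • (q * ψ s)) x
          + deriv (fun s => ψ s + t • (q * deriv φ s)) x * (ψ x + t • (q * deriv φ x))))
      = ∫ x, (deriv φ x * deriv φ x + deriv ψ x * ψ x) := by
    intro t
    have hd1 : ∀ x, deriv (fun s => φ s + t • (q * ψ s)) x
        = deriv φ x + t • (q * deriv ψ x) := fun x =>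
      ((dφ x).fun_add (((dψ x).const_mul q).fun_const_smul t)).deriv
    have hd2 : ∀ x, deriv (fun s => ψ s + t • (q * deriv φ s)) x
        = deriv ψ x + t • (q * deriv (deriv φ) x) := fun x =>
      ((dψ x).fun_add (((dφ' x).const_mul q).fun_const_smul t)).deriv
    simp only [hd1, hd2, density_expand q _ _ _ _ t (ca _) (cc _) (hb' _) hqq]
    rw [MeasureTheory.integral_add hIint ((hTint.const_mul q).fun_smul t),
      MeasureTheory.integral_smul, integral_const_mul_of_integrable hTint,
      hTzero, mul_zero, smul_zero, add_zero]
  simp only [key, deriv_const]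
end
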